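/- Let b ∈ (1/16, 1/12] be a real number, and set a± := (1 ± √(1 − 12b))/2, r := 2√b / (1 − √(1 − 12b)), and θ := arccos( √(1 − 8b − √(1 − 12b)) / (4√b) ). Define vectors in ℂ²: ψ₁ := (1, 0), ψ₂ := (r, √(1 − r²)), ψ₃ := (1/√3, −√(2/3)·e^{iθ}), ψ₄ := (1/√3, −√(2/3)·e^{−iθ}), and define 2×2 matrices E₁ := a₋·ψ₁ψ₁*, E₂ := a₋·ψ₂ψ₂*, E₃ := a₊·ψ₃ψ₃*, E₄ := a₊·ψ₄ψ₄*. Then {E₁, E₂, E₃, E₄} is a semi-SIC POVM with parameter b on ℂ²: each E_x is positive semidefinite of rank one, E₁ + E₂ + E₃ + E₄ = 1, Tr[E_x E_y] = b for all x ≠ y, and {E₁, E₂, E₃, E₄} spans the real vector space of 2×2 Hermitian matrices. -/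

import Mathlib

open Matrix
open scoped ComplexOrder

noncomputable section

/-- The rank-one matrix `ψψ*` with entries `ψ i * conj (ψ j)`. -/
def outer (ψ : Fin 2 → ℂ) : Matrix (Fin 2) (Fin 2) ℂ :=
  Matrix.vecMulVec ψ (star ψ)

/-- `a₊ = (1 + √(1 − 12b))/2`. -/
def aP (b : ℝ) : ℝ := (1 + Real.sqrt (1 - 12 * b)) / 2

/-- `a₋ = (1 − √(1 − 12b))/2`. -/
def aM (b : ℝ) : ℝ := (1 - Real.sqrt (1 - 12 * b)) / 2

/-- `r = 2√b / (1 − √(1 − 12b))`. -/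
def rr (b : ℝ) : ℝ := 2 * Real.sqrt b / (1 - Real.sqrt (1 - 12 * b))

/-- `θ = arccos( √(1 − 8b − √(1 − 12b)) / (4√b) )`. -/
def th (b : ℝ) : ℝ :=
  Real.arccos (Real.sqrt (1 - 8 * b - Real.sqrt (1 - 12 * b)) / (4 * Real.sqrt b))

/-- `ψ₁ = (1, 0)`. -/
def psi1 : Fin 2 → ℂ := ![1, 0]

/-- `ψ₂ = (r, √(1 − r²))`. -/
def psi2 (b : ℝ) : Fin 2 → ℂ := ![(rr b : ℂ), ((Real.sqrt (1 - (rr b) ^ 2) : ℝ) : ℂ)]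

/-- `ψ₃ = (1/√3, −√(2/3)·e^{iθ})`. -/
def psi3 (b : ℝ) : Fin 2 → ℂ :=
  ![((1 / Real.sqrt 3 : ℝ) : ℂ),
    -((Real.sqrt (2 / 3) : ℝ) : ℂ) * Complex.exp ((th b : ℂ) * Complex.I)]

/-- `ψ₄ = (1/√3, −√(2/3)·e^{−iθ})`. -/
def psi4 (b : ℝ) : Fin 2 → ℂ :=
  ![((1 / Real.sqrt 3 : ℝ) : ℂ),
    -((Real.sqrt (2 / 3) : ℝ) : ℂ) * Complex.exp (-(th b : ℂ) * Complex.I)]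

/-- The canonical family `E₁ = a₋ψ₁ψ₁*, E₂ = a₋ψ₂ψ₂*, E₃ = a₊ψ₃ψ₃*, E₄ = a₊ψ₄ψ₄*`. -/
def canonE (b : ℝ) : Fin 4 → Matrix (Fin 2) (Fin 2) ℂ :=
  ![(aM b : ℂ) • outer psi1,
    (aM b : ℂ) • outer (psi2 b),
    (aP b : ℂ) • outer (psi3 b),
    (aP b : ℂ) • outer (psi4 b)]

/-!
Writing `E x = a x • ψ x (ψ x)*` with unit vectors `ψ x`, everything is decided by the Gram matrix
`Tr[E x * E y]`, whose diagonal is `a x ^ 2`. The weights `a₋` and `a₊` are the roots of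
`t ^ 2 - t + 3 * b`, so once the off-diagonal entries are all `b`, each row of the Gram matrix sums
to `Tr[E x]`. Hence `F = ∑ x, E x` satisfies `Tr[F] = Tr[F ^ 2] = 2`, that is
`Tr[(F - 1) ^ 2] = 0`, and `F = 1`. Since `b < a x ^ 2`, the Gram matrix is a nonnegative multiple
of the all-ones matrix plus a positive diagonal one; this makes the `E x` linearly independent, and
they span by a dimension count.

What remains are the six overlaps `|⟨ψ x, ψ y⟩| ^ 2`. They come out right because the angle `θ`
satisfies `b * (1 + 8 * cos θ ^ 2) = a₋ ^ 2`, equivalently `√(1 - r ^ 2) = 2 * √2 * r * cos θ`.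
-/

theorem mem_span_real_of_mem_span_complex {ι V : Type*} [Finite ι] [AddCommGroup V] [Module ℂ V]
    [StarAddMonoid V] [StarModule ℂ V] {v : ι → V} (hv : ∀ x, IsSelfAdjoint (v x)) {w : V}
    (hw : IsSelfAdjoint w) (hspan : w ∈ Submodule.span ℂ (Set.range v)) :
    w ∈ Submodule.span ℝ (Set.range v) := by
  cases nonempty_fintype ι
  obtain ⟨c, rfl⟩ := (Submodule.mem_span_range_iff_exists_fun ℂ).1 hspan
  refine (Submodule.mem_span_range_iff_exists_fun ℝ).2 ⟨fun x ↦ (c x).re, ?_⟩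
  rw [← hw.coe_realPart]
  simp [realPart_smul, (hv _).coe_realPart, (hv _).imaginaryPart]

theorem rank_vecMulVec_of_ne_zero {m n K : Type*} [Fintype n] [Field K] {w : m → K} {v : n → K}
    (hw : w ≠ 0) (hv : v ≠ 0) : (vecMulVec w v).rank = 1 := by
  classical
  obtain ⟨i, hi⟩ := Function.ne_iff.1 hw
  obtain ⟨j, hj⟩ := Function.ne_iff.1 hv
  refine le_antisymm (rank_vecMulVec_le w v) (Nat.one_le_iff_ne_zero.2 fun hrank ↦ ?_)
  rw [rank, Submodule.finrank_eq_zero, LinearMap.range_eq_bot] at hrank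
  have hcol := congrFun (LinearMap.congr_fun hrank (Pi.single j 1)) i
  exact mul_ne_zero hi hj (by simpa [vecMulVec_apply] using hcol)

theorem eq_zero_of_mul_sum_add_mul_eq_zero {ι 𝕜 : Type*} [Fintype ι] [RCLike 𝕜] {b : ℝ} {d : ι → ℝ}
    {c : ι → 𝕜} (hb : 0 ≤ b) (hd : ∀ y, 0 < d y) (hc : ∀ y, b * ∑ x, c x + d y * c y = 0) (y : ι) :
    c y = 0 := by
  have hsolve (z : ι) : c z = -((b / d z : ℝ) * ∑ x, c x) := by
    have hdz : (d z : 𝕜) ≠ 0 := RCLike.ofReal_ne_zero.2 (hd z).ne'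
    push_cast
    field_simp
    linear_combination hc z
  have hsum : ∑ x, c x = -((∑ z, b / d z : ℝ) * ∑ x, c x) := by
    conv_lhs => rw [Finset.sum_congr rfl fun z _ ↦ hsolve z]
    push_cast
    rw [Finset.sum_neg_distrib, Finset.sum_mul]
  have hfactor : ((1 + ∑ z, b / d z : ℝ) : 𝕜) ≠ 0 :=
    RCLike.ofReal_ne_zero.2 (add_pos_of_pos_of_nonneg one_pos
      (Finset.sum_nonneg fun z _ ↦ div_nonneg hb (hd z).le)).ne'
  have hsum_zero : ∑ x, c x = 0 := by
    refine (mul_eq_zero.1 ?_).resolve_left hfactor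
    push_cast at hsum ⊢
    linear_combination hsum
  rw [hsolve y, hsum_zero, mul_zero, neg_zero]

section TraceForm

variable {ι n : Type*} [Fintype n]

theorem eq_one_of_trace_eq_card {R : Type*} [CommRing R] [PartialOrder R] [StarRing R]
    [StarOrderedRing R] [NoZeroDivisors R] [DecidableEq n] {F : Matrix n n R} (hF : F.IsHermitian)
    (htrace : F.trace = Fintype.card n) (htrace_sq : (F * F).trace = Fintype.card n) : F = 1 := by
  have hdist : ((F - 1)ᴴ * (F - 1)).trace = 0 := by
    rw [(hF.sub isHermitian_one).eq]
    simp [mul_sub, sub_mul, htrace, htrace_sq]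
  exact sub_eq_zero.1 (trace_conjTranspose_mul_self_eq_zero_iff.1 hdist)

theorem linearIndependent_of_trace_mul_eq {𝕜 : Type*} [Finite ι] [RCLike 𝕜] {E : ι → Matrix n n 𝕜}
    {b : ℝ} {g : ι → ℝ} (hb : 0 ≤ b) (hg : ∀ x, b < g x) (hdiag : ∀ x, (E x * E x).trace = g x)
    (hoff : ∀ x y, x ≠ y → (E x * E y).trace = b) : LinearIndependent 𝕜 E := by
  classical
  cases nonempty_fintype ι
  have hgram (x y : ι) : (E x * E y).trace = b + if x = y then (g y - b : 𝕜) else 0 := by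
    by_cases hxy : x = y
    · simp [hxy, hdiag]
    · simp [hxy, hoff]
  refine Fintype.linearIndependent_iff.2 fun c hc ↦
    eq_zero_of_mul_sum_add_mul_eq_zero hb (fun y ↦ sub_pos.2 (hg y)) fun y ↦ ?_
  have htrace : ∑ x, c x * (E x * E y).trace = 0 := by
    simpa [Finset.sum_mul, trace_sum] using congrArg (fun M ↦ (M * E y).trace) hc
  simpa [hgram, mul_add, Finset.sum_add_distrib, ← Finset.sum_mul, mul_comm] using htrace

theorem mem_span_real_of_linearIndependent [Fintype ι] {E : ι → Matrix n n ℂ}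
    (hE : ∀ x, (E x).IsHermitian) (hli : LinearIndependent ℂ E)
    (hcard : Fintype.card ι = Fintype.card n ^ 2) {A : Matrix n n ℂ} (hA : A.IsHermitian) :
    A ∈ Submodule.span ℝ (Set.range E) := by
  have htop : Submodule.span ℂ (Set.range E) = ⊤ :=
    hli.span_eq_top_of_card_eq_finrank' (by simp [hcard, Module.finrank_matrix, sq])
  exact mem_span_real_of_mem_span_complex hE hA (htop ▸ Submodule.mem_top)

end TraceForm

/-- Semi-SIC POVM with parameter `b` on `ℂ^n`, where `n` is a finite type. The members are indexed
by an arbitrary type with `(card n) ^ 2` elements instead of `Fin (d ^ 2)`. -/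
structure IsSemiSIC {ι n : Type*} [Fintype ι] [Fintype n] [DecidableEq n] (b : ℝ)
    (E : ι → Matrix n n ℂ) : Prop where
  card_eq : Fintype.card ι = Fintype.card n ^ 2
  posSemidef (x : ι) : (E x).PosSemidef
  rank_eq_one (x : ι) : (E x).rank = 1
  sum_eq_one : ∑ x, E x = 1
  trace_mul (x y : ι) : x ≠ y → (E x * E y).trace = b
  mem_span (A : Matrix n n ℂ) : A.IsHermitian → A ∈ Submodule.span ℝ (Set.range E)

/-- The overlap `|⟨φ, ψ⟩|²` of two vectors. -/
def overlap {n : Type*} [Fintype n] (φ ψ : n → ℂ) : ℝ :=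
  Complex.normSq (star φ ⬝ᵥ ψ)

theorem overlap_comm {n : Type*} [Fintype n] (φ ψ : n → ℂ) : overlap φ ψ = overlap ψ φ := by
  rw [overlap, star_dotProduct, ← Complex.normSq_conj, starRingEnd_apply, star_star,
    dotProduct_comm, overlap, dotProduct_comm]

/-- The family of rank-one operators `a x • ψ x (ψ x)*`, the general form of a rank-one POVM with
weights `a` and, when the `ψ x` are unit vectors, with traces `a x`. -/
def rankOneFamily {ι n : Type*} (a : ι → ℝ) (ψ : ι → n → ℂ) (x : ι) : Matrix n n ℂ :=
  (a x : ℂ) • vecMulVec (ψ x) (star (ψ x))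

namespace rankOneFamily

variable {ι n : Type*} {a : ι → ℝ} {ψ : ι → n → ℂ}

theorem posSemidef [Finite n] {x : ι} (ha : 0 ≤ a x) : (rankOneFamily a ψ x).PosSemidef :=
  (posSemidef_vecMulVec_self_star (ψ x)).smul (Complex.zero_le_real.2 ha)

variable [Fintype n]

theorem rank_eq_one {x : ι} (ha : a x ≠ 0) (hψ : ψ x ≠ 0) : (rankOneFamily a ψ x).rank = 1 := by
  rw [rankOneFamily, ← smul_vecMulVec]
  exact rank_vecMulVec_of_ne_zero (smul_ne_zero (Complex.ofReal_ne_zero.2 ha) hψ)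
    (star_ne_zero.2 hψ)

theorem trace_of_unit {x : ι} (hψ : star (ψ x) ⬝ᵥ ψ x = 1) :
    (rankOneFamily a ψ x).trace = a x := by
  rw [rankOneFamily, trace_smul, trace_vecMulVec, dotProduct_comm, hψ, smul_eq_mul, mul_one]

theorem trace_mul (x y : ι) : (rankOneFamily a ψ x * rankOneFamily a ψ y).trace =
    (a x * a y * overlap (ψ x) (ψ y) : ℝ) := by
  have hconj : star (ψ y) ⬝ᵥ ψ x = star (star (ψ x) ⬝ᵥ ψ y) := by
    rw [star_dotProduct, dotProduct_comm]
  simp only [rankOneFamily, overlap, smul_mul_smul_comm, vecMulVec_mul_vecMulVec, trace_smul,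
    trace_vecMulVec, dotProduct_smul, smul_eq_mul, Complex.ofReal_mul, ← Complex.mul_conj]
  rw [dotProduct_comm (ψ x), hconj, starRingEnd_apply]

theorem trace_mul_self_of_unit {x : ι} (hψ : star (ψ x) ⬝ᵥ ψ x = 1) :
    (rankOneFamily a ψ x * rankOneFamily a ψ x).trace = (a x ^ 2 : ℝ) := by
  rw [trace_mul, overlap, hψ, map_one, mul_one, sq]

theorem sum_eq_one [Fintype ι] [DecidableEq n] {b : ℝ} (ha : ∀ x, 0 ≤ a x)
    (hunit : ∀ x, star (ψ x) ⬝ᵥ ψ x = 1)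
    (hoverlap : ∀ x y, x ≠ y → a x * a y * overlap (ψ x) (ψ y) = b)
    (hquad : ∀ x, a x ^ 2 + (Fintype.card ι - 1) * b = a x) (hsum : ∑ x, a x = Fintype.card n) :
    ∑ x, rankOneFamily a ψ x = 1 := by
  classical
  have hsumC : ∑ x, (a x : ℂ) = Fintype.card n := by exact_mod_cast hsum
  have hrow (x : ι) : ∑ y, (rankOneFamily a ψ x * rankOneFamily a ψ y).trace = a x := by
    have hoff (y : ι) (hy : y ∈ Finset.univ.erase x) :
        (rankOneFamily a ψ x * rankOneFamily a ψ y).trace = b := by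
      rw [trace_mul, hoverlap x y (Finset.ne_of_mem_erase hy).symm]
    rw [← Finset.add_sum_erase _ _ (Finset.mem_univ x), trace_mul_self_of_unit (hunit x),
      Finset.sum_congr rfl hoff, Finset.sum_const, Finset.card_erase_of_mem (Finset.mem_univ x),
      Finset.card_univ, nsmul_eq_mul, Nat.cast_pred (Fintype.card_pos_iff.2 ⟨x⟩)]
    exact_mod_cast hquad x
  refine eq_one_of_trace_eq_card (isSelfAdjoint_sum _ fun x _ ↦ (posSemidef (ha x)).1) ?_ ?_
  · simp only [trace_sum, trace_of_unit (hunit _), hsumC]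
  · simp only [Finset.sum_mul_sum, trace_sum, hrow, hsumC]

theorem isSemiSIC [Fintype ι] [DecidableEq n] {b : ℝ} (hcard : Fintype.card ι = Fintype.card n ^ 2)
    (hb : 0 ≤ b) (hunit : ∀ x, star (ψ x) ⬝ᵥ ψ x = 1)
    (hoverlap : ∀ x y, x ≠ y → a x * a y * overlap (ψ x) (ψ y) = b)
    (hquad : ∀ x, a x ^ 2 + (Fintype.card ι - 1) * b = a x) (hsum : ∑ x, a x = Fintype.card n)
    (hlt : ∀ x, b < a x ^ 2) : IsSemiSIC b (rankOneFamily a ψ) := by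
  have ha (x : ι) : 0 < a x := by
    have hcard_pos : (1 : ℝ) ≤ Fintype.card ι := by
      exact_mod_cast Fintype.card_pos_iff.2 ⟨x⟩
    linarith [hquad x, hlt x, mul_nonneg (sub_nonneg.2 hcard_pos) hb]
  have hne (x : ι) : ψ x ≠ 0 := fun h ↦ by simpa [h] using hunit x
  have htrace (x y : ι) (hxy : x ≠ y) :
      (rankOneFamily a ψ x * rankOneFamily a ψ y).trace = b := by
    rw [trace_mul, hoverlap x y hxy]
  have hli : LinearIndependent ℂ (rankOneFamily a ψ) :=
    linearIndependent_of_trace_mul_eq hb hlt (fun x ↦ trace_mul_self_of_unit (hunit x)) htrace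
  exact
    { card_eq := hcard
      posSemidef := fun x ↦ posSemidef (ha x).le
      rank_eq_one := fun x ↦ rank_eq_one (ha x).ne' (hne x)
      sum_eq_one := sum_eq_one (fun x ↦ (ha x).le) hunit hoverlap hquad hsum
      trace_mul := htrace
      mem_span := fun _ ↦
        mem_span_real_of_linearIndependent (fun x ↦ (posSemidef (ha x).le).1) hli hcard }

end rankOneFamily

section Parameters

variable {b : ℝ}

theorem aM_add_aP : aM b + aP b = 1 := by
  rw [aM, aP]
  ring

theorem aM_mul_aP (hb : b ≤ 1 / 12) : aM b * aP b = 3 * b := by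
  rw [aM, aP]
  linear_combination -(1 / 4) * Real.sq_sqrt (show 0 ≤ 1 - 12 * b by linarith)

theorem aM_sq (hb : b ≤ 1 / 12) : aM b ^ 2 = aM b - 3 * b := by
  linear_combination aM b * aM_add_aP - aM_mul_aP hb

theorem aP_sq (hb : b ≤ 1 / 12) : aP b ^ 2 = aP b - 3 * b := by
  linear_combination aP b * aM_add_aP - aM_mul_aP hb

theorem aM_le_aP : aM b ≤ aP b := by
  rw [aM, aP]
  linarith [Real.sqrt_nonneg (1 - 12 * b)]

theorem aM_pos (hb : 0 < b) : 0 < aM b := by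
  have : √(1 - 12 * b) < 1 := (Real.sqrt_lt' one_pos).2 (by linarith)
  rw [aM]
  linarith

theorem four_mul_lt_aM (hb : b ∈ Set.Ioc (1 / 16) (1 / 12)) : 4 * b < aM b := by
  obtain ⟨hlo, hhi⟩ := hb
  have : √(1 - 12 * b) < 1 - 8 * b := (Real.sqrt_lt' (by linarith)).2 (by nlinarith)
  rw [aM]
  linarith

theorem aM_mul_rr (hb : 0 < b) : aM b * rr b = √b := by
  have hrr : rr b = √b / aM b := by
    rw [rr, aM]
    field
  rw [hrr, mul_div_cancel₀ _ (aM_pos hb).ne']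

theorem aM_sq_mul_rr_sq (hb : 0 < b) : aM b ^ 2 * rr b ^ 2 = b := by
  rw [← mul_pow, aM_mul_rr hb, Real.sq_sqrt hb.le]

theorem rr_pos (hb : 0 < b) : 0 < rr b :=
  pos_of_mul_pos_right (aM_mul_rr hb ▸ Real.sqrt_pos.2 hb) (aM_pos hb).le

theorem cos_th (hb : 1 / 24 ≤ b) : Real.cos (th b) = √(2 * aM b - 8 * b) / (4 * √b) := by
  have hb0 : 0 < b := by linarith
  have hthdef : th b = Real.arccos (√(2 * aM b - 8 * b) / (4 * √b)) := by
    rw [th, aM]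
    ring_nf
  have hle : √(2 * aM b - 8 * b) ≤ 4 * √b := by
    refine Real.sqrt_le_iff.2 ⟨by positivity, ?_⟩
    rw [mul_pow, Real.sq_sqrt hb0.le]
    linarith [aM_le_aP (b := b), aM_add_aP (b := b)]
  rw [hthdef, Real.cos_arccos]
  · exact neg_one_lt_zero.le.trans (by positivity)
  · exact div_le_one_of_le₀ hle (by positivity)

theorem cos_th_nonneg : 0 ≤ Real.cos (th b) :=
  Real.cos_nonneg_of_neg_pi_div_two_le_of_le
    ((neg_nonpos.2 Real.pi_div_two_pos.le).trans (Real.arccos_nonneg _))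
    (Real.arccos_le_pi_div_two.2 (by positivity))

theorem mul_one_add_eight_mul_cos_th_sq (hb : b ∈ Set.Ioc (1 / 16) (1 / 12)) :
    b * (1 + 8 * Real.cos (th b) ^ 2) = aM b ^ 2 := by
  have hb0 : 0 < b := by linarith [hb.1]
  rw [cos_th (by linarith [hb.1]), div_pow, mul_pow, Real.sq_sqrt hb0.le,
    Real.sq_sqrt (by linarith [four_mul_lt_aM hb]), aM_sq hb.2]
  field

theorem one_sub_rr_sq (hb : b ∈ Set.Ioc (1 / 16) (1 / 12)) :
    1 - rr b ^ 2 = 8 * rr b ^ 2 * Real.cos (th b) ^ 2 := by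
  have hb0 : 0 < b := by linarith [hb.1]
  refine mul_left_cancel₀ (pow_pos (aM_pos hb0) 2).ne' ?_
  linear_combination
    (-1 - 8 * Real.cos (th b) ^ 2) * aM_sq_mul_rr_sq hb0 - mul_one_add_eight_mul_cos_th_sq hb

theorem sqrt_one_sub_rr_sq (hb : b ∈ Set.Ioc (1 / 16) (1 / 12)) :
    √(1 - rr b ^ 2) = 2 * √2 * rr b * Real.cos (th b) := by
  have hb0 : 0 < b := by linarith [hb.1]
  rw [one_sub_rr_sq hb]
  have hnonneg : 0 ≤ 2 * √2 * rr b * Real.cos (th b) :=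
    mul_nonneg (mul_nonneg (by positivity) (rr_pos hb0).le) cos_th_nonneg
  rw [← Real.sqrt_sq hnonneg, mul_pow, mul_pow, mul_pow, Real.sq_sqrt zero_le_two]
  ring_nf

end Parameters

section Overlaps

/-- The unit vector `(1/√3, −√(2/3)·e^{iφ})`; `ψ₃` and `ψ₄` are the cases `φ = θ` and `φ = −θ`. -/
def phaseVec (φ : ℝ) : Fin 2 → ℂ :=
  ![(1 / √3 : ℝ), -(√(2 / 3) : ℝ) * Complex.exp (φ * Complex.I)]

theorem star_dotProduct_ofReal (x y : ℝ) :
    star ![(x : ℂ), (y : ℂ)] ⬝ᵥ ![(x : ℂ), (y : ℂ)] = (x ^ 2 + y ^ 2 : ℝ) := by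
  simp [dotProduct, Fin.sum_univ_two, sq]

theorem star_phaseVec_dotProduct (φ χ : ℝ) :
    star (phaseVec φ) ⬝ᵥ phaseVec χ = 1 / 3 + 2 / 3 * Complex.exp ((χ - φ : ℝ) * Complex.I) := by
  have hfirst : ((1 / √3 : ℝ) : ℂ) * (1 / √3 : ℝ) = 1 / 3 := by
    rw [← Complex.ofReal_mul, div_mul_div_comm, Real.mul_self_sqrt zero_le_three]
    norm_num
  have hsecond : ((√(2 / 3) : ℝ) : ℂ) * (√(2 / 3) : ℝ) = 2 / 3 := by
    rw [← Complex.ofReal_mul, Real.mul_self_sqrt (by positivity)]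
    norm_num
  have hexp : Complex.exp ((χ - φ : ℝ) * Complex.I) =
      star (Complex.exp (φ * Complex.I)) * Complex.exp (χ * Complex.I) := by
    rw [Complex.star_def, ← Complex.exp_conj, ← Complex.exp_add, map_mul, Complex.conj_ofReal,
      Complex.conj_I]
    push_cast
    ring_nf
  rw [hexp]
  simp only [phaseVec, dotProduct, Fin.sum_univ_two, Pi.star_apply, cons_val, Complex.star_def,
    map_mul, map_neg, Complex.conj_ofReal]
  linear_combination hfirst +
    (starRingEnd ℂ) (Complex.exp (φ * Complex.I)) * Complex.exp (χ * Complex.I) * hsecond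

theorem star_phaseVec_dotProduct_self (φ : ℝ) : star (phaseVec φ) ⬝ᵥ phaseVec φ = 1 := by
  rw [star_phaseVec_dotProduct]
  norm_num

theorem overlap_ofReal (x y z w : ℝ) :
    overlap ![(x : ℂ), (y : ℂ)] ![(z : ℂ), (w : ℂ)] = (x * z + y * w) ^ 2 := by
  have hinner : star ![(x : ℂ), (y : ℂ)] ⬝ᵥ ![(z : ℂ), (w : ℂ)] = (x * z + y * w : ℝ) := by
    simp [dotProduct, Fin.sum_univ_two]
  rw [overlap, hinner, Complex.normSq_ofReal, sq]

theorem overlap_phaseVec (φ χ : ℝ) :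
    overlap (phaseVec φ) (phaseVec χ) = (5 + 4 * Real.cos (χ - φ)) / 9 := by
  have hinner : star (phaseVec φ) ⬝ᵥ phaseVec χ =
      (1 / 3 + 2 / 3 * Real.cos (χ - φ) : ℝ) + (2 / 3 * Real.sin (χ - φ) : ℝ) * Complex.I := by
    rw [star_phaseVec_dotProduct, Complex.exp_mul_I]
    push_cast
    ring
  rw [overlap, hinner, Complex.normSq_add_mul_I]
  linear_combination (4 / 9) * Real.sin_sq_add_cos_sq (χ - φ)

theorem overlap_ofReal_phaseVec (x y φ : ℝ) :
    overlap ![(x : ℂ), (y : ℂ)] (phaseVec φ) =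
      (x ^ 2 + 2 * y ^ 2 - 2 * √2 * x * y * Real.cos φ) / 3 := by
  have hinner : star ![(x : ℂ), (y : ℂ)] ⬝ᵥ phaseVec φ =
      ((x - √2 * y * Real.cos φ) / √3 : ℝ) + (-(√2 * y * Real.sin φ) / √3 : ℝ) * Complex.I := by
    simp only [phaseVec, dotProduct, Fin.sum_univ_two, Pi.star_apply, Complex.star_def, cons_val,
      Complex.conj_ofReal, Complex.exp_mul_I, Real.sqrt_div zero_le_two]
    push_cast
    ring
  rw [overlap, hinner, Complex.normSq_add_mul_I, div_pow, div_pow,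
    Real.sq_sqrt zero_le_three]
  linear_combination (y ^ 2 / 3) * (Real.cos φ ^ 2 + Real.sin φ ^ 2) * Real.sq_sqrt zero_le_two +
    2 * y ^ 2 / 3 * Real.sin_sq_add_cos_sq φ

end Overlaps

section CanonicalFamily

variable {b : ℝ}

theorem psi1_eq : psi1 = ![((1 : ℝ) : ℂ), ((0 : ℝ) : ℂ)] := by
  simp [psi1]

theorem psi3_eq : psi3 b = phaseVec (th b) := rfl

theorem psi4_eq : psi4 b = phaseVec (-th b) := by
  simp [psi4, phaseVec]

/-- The weights `(a₋, a₋, a₊, a₊)` of the canonical family. -/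
def canonWeight (b : ℝ) : Fin 4 → ℝ := ![aM b, aM b, aP b, aP b]

/-- The unit vectors `(ψ₁, ψ₂, ψ₃, ψ₄)` of the canonical family. -/
def canonVec (b : ℝ) : Fin 4 → Fin 2 → ℂ := ![psi1, psi2 b, psi3 b, psi4 b]

theorem canonE_eq_rankOneFamily : canonE b = rankOneFamily (canonWeight b) (canonVec b) := by
  funext x
  fin_cases x <;> rfl

theorem overlap_psi1_psi2 : overlap psi1 (psi2 b) = rr b ^ 2 := by
  rw [psi1_eq, psi2, overlap_ofReal]
  ring

theorem overlap_psi1_phaseVec (φ : ℝ) : overlap psi1 (phaseVec φ) = 1 / 3 := by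
  rw [psi1_eq, overlap_ofReal_phaseVec]
  ring

theorem overlap_psi2_phaseVec (hb : b ∈ Set.Ioc (1 / 16) (1 / 12)) {φ : ℝ}
    (hφ : Real.cos φ = Real.cos (th b)) : overlap (psi2 b) (phaseVec φ) = 1 / 3 := by
  rw [psi2, overlap_ofReal_phaseVec, hφ, sqrt_one_sub_rr_sq hb]
  linear_combination -(1 / 3) * one_sub_rr_sq hb +
    (4 / 3) * rr b ^ 2 * Real.cos (th b) ^ 2 * Real.sq_sqrt zero_le_two

theorem overlap_psi3_psi4 : overlap (psi3 b) (psi4 b) = (1 + 8 * Real.cos (th b) ^ 2) / 9 := by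
  rw [psi3_eq, psi4_eq, overlap_phaseVec,
    show -th b - th b = -(2 * th b) by ring, Real.cos_neg, Real.cos_two_mul]
  ring

theorem star_psi1_dotProduct_self : star psi1 ⬝ᵥ psi1 = 1 := by
  rw [psi1_eq, star_dotProduct_ofReal]
  simp

theorem star_psi2_dotProduct_self (hb : b ∈ Set.Ioc (1 / 16) (1 / 12)) :
    star (psi2 b) ⬝ᵥ psi2 b = 1 := by
  have hnonneg : 0 ≤ 1 - rr b ^ 2 := by
    rw [one_sub_rr_sq hb]
    positivity
  rw [psi2, star_dotProduct_ofReal, Real.sq_sqrt hnonneg]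
  simp

theorem star_canonVec_dotProduct_self (hb : b ∈ Set.Ioc (1 / 16) (1 / 12)) (x : Fin 4) :
    star (canonVec b x) ⬝ᵥ canonVec b x = 1 := by
  fin_cases x
  · exact star_psi1_dotProduct_self
  · exact star_psi2_dotProduct_self hb
  · exact star_phaseVec_dotProduct_self _
  · simpa [canonVec, psi4_eq] using star_phaseVec_dotProduct_self _

theorem canonWeight_mul_overlap (hb : b ∈ Set.Ioc (1 / 16) (1 / 12)) (x y : Fin 4) (hxy : x ≠ y) :
    canonWeight b x * canonWeight b y * overlap (canonVec b x) (canonVec b y) = b := by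
  have hb0 : 0 < b := by linarith [hb.1]
  wlog hlt : x < y generalizing x y
  · rw [mul_comm (canonWeight b x), overlap_comm]
    exact this y x hxy.symm (hxy.lt_or_gt.resolve_left hlt)
  have hmixed : aM b * aP b * (1 / 3) = b := by
    rw [aM_mul_aP hb.2]
    ring
  have h12 : aM b * aM b * overlap psi1 (psi2 b) = b := by
    rw [overlap_psi1_psi2, ← sq, aM_sq_mul_rr_sq hb0]
  have h13 : aM b * aP b * overlap psi1 (psi3 b) = b := by
    rw [psi3_eq, overlap_psi1_phaseVec, hmixed]
  have h14 : aM b * aP b * overlap psi1 (psi4 b) = b := by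
    rw [psi4_eq, overlap_psi1_phaseVec, hmixed]
  have h23 : aM b * aP b * overlap (psi2 b) (psi3 b) = b := by
    rw [psi3_eq, overlap_psi2_phaseVec hb rfl, hmixed]
  have h24 : aM b * aP b * overlap (psi2 b) (psi4 b) = b := by
    rw [psi4_eq, overlap_psi2_phaseVec hb (Real.cos_neg _), hmixed]
  have h34 : aP b * aP b * overlap (psi3 b) (psi4 b) = b := by
    rw [overlap_psi3_psi4]
    refine mul_left_cancel₀ hb0.ne' ?_
    linear_combination aP b ^ 2 / 9 * mul_one_add_eight_mul_cos_th_sq hb +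
      (aM b * aP b + 3 * b) / 9 * aM_mul_aP hb.2
  fin_cases x <;> fin_cases y <;> first | exact absurd hlt (by decide) | assumption

theorem canonWeight_sq_add (hb : b ≤ 1 / 12) (x : Fin 4) :
    canonWeight b x ^ 2 + 3 * b = canonWeight b x := by
  fin_cases x <;> simp [canonWeight, aM_sq hb, aP_sq hb]

theorem lt_canonWeight_sq (hb : b ∈ Set.Ioc (1 / 16) (1 / 12)) (x : Fin 4) :
    b < canonWeight b x ^ 2 := by
  have hge : aM b ≤ canonWeight b x := by
    fin_cases x <;> simp [canonWeight, aM_le_aP]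
  linarith [canonWeight_sq_add hb.2 x, four_mul_lt_aM hb]

theorem sum_canonWeight : ∑ x, canonWeight b x = 2 := by
  simp only [canonWeight, Fin.sum_univ_four, cons_val]
  linear_combination 2 * aM_add_aP (b := b)

end CanonicalFamily

theorem canonE_isSemiSIC (b : ℝ) (hb : b ∈ Set.Ioc (1 / 16 : ℝ) (1 / 12)) :
    (∀ x, (canonE b x).PosSemidef) ∧
    (∀ x, (canonE b x).rank = 1) ∧
    (∑ x, canonE b x = 1) ∧
    (∀ x y, x ≠ y → (canonE b x * canonE b y).trace = (b : ℂ)) ∧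
    (∀ A : Matrix (Fin 2) (Fin 2) ℂ, A.IsHermitian →
      A ∈ Submodule.span ℝ (Set.range (canonE b))) := by
  have hcanon : IsSemiSIC b (canonE b) := by
    rw [canonE_eq_rankOneFamily]
    refine rankOneFamily.isSemiSIC (by simp) (by linarith [hb.1]) (star_canonVec_dotProduct_self hb)
      (canonWeight_mul_overlap hb) (fun x ↦ ?_) (by simp [sum_canonWeight]) (lt_canonWeight_sq hb)
    norm_num [canonWeight_sq_add hb.2 x]
  exact ⟨hcanon.posSemidef, hcanon.rank_eq_one, hcanon.sum_eq_one, hcanon.trace_mul,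
    hcanon.mem_span⟩
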